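/- arXiv:1804.10224 — 13 statements merged into one kernel-verified Lean document; each statement's English description precedes it below -/
import Mathlib

section
/- Suppose the sequences S_n(t), S̄_n(t) ∈ ℂ^N, v_n(t) ∈ ℂ, ψ_n(t) ∈ ℂ, φ_n(t), χ_n(t) ∈ ℂ^N (n ∈ ℤ, t ∈ ℝ, all differentiable in t) satisfy, for all n and t, the spectral problem (YO-L) and the time evolution (YO-M). Then for all n and t the following three identities hold: (i) [i S̄_{n,t} + v_n(S̄_{n+1} + S̄_{n−1}) − c S̄_n](ψ_{n+1} + ψ_{n−1}) = 0 (an identity in ℂ^N); (ii) [i S_{n,t} − v_n(S_{n+1} + S_{n−1}) + c S_n](ψ_{n+1} + ψ_{n−1}) = 0 (an identity in ℂ^N); (iii) i[v_{n,t} − (1/2) v_n Δ⁺(⟨S_n, S̄_{n−1}⟩ + ⟨S_{n−1}, S̄_n⟩)](ψ_{n+1} + ψ_{n−1}) + ⟨i S_{n,t} − v_n(S_{n+1} + S_{n−1}) + c S_n, φ_n⟩ + ⟨χ_n, i S̄_{n,t} + v_n(S̄_{n+1} + S̄_{n−1}) − c S̄_n⟩ = 0. -/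
open Complex BigOperators

/-- Bilinear pairing on `ℂ^N` (no complex conjugation). -/
noncomputable def pair {N : ℕ} (a b : Fin N → ℂ) : ℂ := ∑ k, a k * b k

section helpers
variable {N : ℕ}

lemma pair_add_left (a b d : Fin N → ℂ) : pair (a + b) d = pair a d + pair b d := by
  simp [pair, add_mul, Finset.sum_add_distrib]

lemma pair_add_right (a b d : Fin N → ℂ) : pair d (a + b) = pair d a + pair d b := by
  simp [pair, mul_add, Finset.sum_add_distrib]

lemma pair_sub_left (a b d : Fin N → ℂ) : pair (a - b) d = pair a d - pair b d := by
  simp [pair, sub_mul, Finset.sum_sub_distrib]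

lemma pair_sub_right (a b d : Fin N → ℂ) : pair d (a - b) = pair d a - pair d b := by
  simp [pair, mul_sub, Finset.sum_sub_distrib]

lemma pair_neg_left (b d : Fin N → ℂ) : pair (-b) d = - pair b d := by
  simp [pair]

lemma pair_smul_left (r : ℂ) (a d : Fin N → ℂ) : pair (r • a) d = r * pair a d := by
  simp [pair, Finset.mul_sum, mul_assoc]

lemma pair_smul_right (r : ℂ) (a d : Fin N → ℂ) : pair d (r • a) = r * pair d a := by
  simp [pair, Finset.mul_sum, mul_left_comm]

lemma pair_hasDerivAt {a b : ℝ → Fin N → ℂ} {a' b' : Fin N → ℂ} {t : ℝ}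
    (ha : HasDerivAt a a' t) (hb : HasDerivAt b b' t) :
    HasDerivAt (fun s => pair (a s) (b s)) (pair a' (b t) + pair (a t) b') t := by
  unfold pair
  rw [← Finset.sum_add_distrib]
  exact HasDerivAt.fun_sum fun k _ =>
    ((hasDerivAt_pi.1 ha) k).fun_mul ((hasDerivAt_pi.1 hb) k)

end helpers

theorem stmt0 {N : ℕ} (hN : 1 ≤ N)
    (S Sb : ℤ → ℝ → Fin N → ℂ) (v ψ : ℤ → ℝ → ℂ)
    (φ χ : ℤ → ℝ → Fin N → ℂ) (c lam : ℂ)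
    (hSd : ∀ n, Differentiable ℝ (S n)) (hSbd : ∀ n, Differentiable ℝ (Sb n))
    (hvd : ∀ n, Differentiable ℝ (v n)) (hψd : ∀ n, Differentiable ℝ (ψ n))
    (hφd : ∀ n, Differentiable ℝ (φ n)) (hχd : ∀ n, Differentiable ℝ (χ n))
    (hL1 : ∀ (n : ℤ) (t : ℝ), v n t * (ψ (n+1) t + ψ (n-1) t)
      = lam * ψ n t - pair (S n t) (φ n t) - pair (χ n t) (Sb n t))
    (hL2 : ∀ (n : ℤ) (t : ℝ), φ (n+1) t - φ n t
      = ((Complex.I/2) * (ψ (n+1) t + ψ (n-1) t)) • Sb n t)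
    (hL3 : ∀ (n : ℤ) (t : ℝ), χ (n+1) t + χ n t
      = ((Complex.I/2) * (ψ (n+1) t + ψ (n-1) t)) • S n t)
    (hM1 : ∀ (n : ℤ) (t : ℝ), Complex.I * deriv (ψ n) t
      = v n t * (ψ (n+1) t + ψ (n-1) t) - c * ψ n t)
    (hM2 : ∀ (n : ℤ) (t : ℝ), deriv (φ n) t
      = ((1/2) * v n t * (ψ (n+1) t + ψ (n-1) t)) • Sb (n-1) t
        - ((1/2) * v (n-1) t * (ψ n t + ψ (n-2) t)) • Sb n t)
    (hM3 : ∀ (n : ℤ) (t : ℝ), deriv (χ n) t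
      = ((1/2) * v n t * (ψ (n+1) t + ψ (n-1) t)) • S (n-1) t
        + ((1/2) * v (n-1) t * (ψ n t + ψ (n-2) t)) • S n t
        + (2 * Complex.I * c) • χ n t) :
    ∀ (n : ℤ) (t : ℝ),
      ((ψ (n+1) t + ψ (n-1) t) •
        (Complex.I • deriv (Sb n) t + (v n t) • (Sb (n+1) t + Sb (n-1) t) - c • Sb n t) = 0)
      ∧ ((ψ (n+1) t + ψ (n-1) t) •
        (Complex.I • deriv (S n) t - (v n t) • (S (n+1) t + S (n-1) t) + c • S n t) = 0)
      ∧ (Complex.I * (deriv (v n) t - (1/2) * v n t *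
          ((pair (S (n+1) t) (Sb n t) + pair (S n t) (Sb (n+1) t))
            - (pair (S n t) (Sb (n-1) t) + pair (S (n-1) t) (Sb n t))))
          * (ψ (n+1) t + ψ (n-1) t)
        + pair (Complex.I • deriv (S n) t - (v n t) • (S (n+1) t + S (n-1) t) + c • S n t)
            (φ n t)
        + pair (χ n t)
            (Complex.I • deriv (Sb n) t + (v n t) • (Sb (n+1) t + Sb (n-1) t) - c • Sb n t)
        = 0) := by
  intro n t
  have dS := fun m => (hSd m t).hasDerivAt
  have dSb := fun m => (hSbd m t).hasDerivAt
  have dv := fun m => (hvd m t).hasDerivAt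
  have dψ := fun m => (hψd m t).hasDerivAt
  have dφ := fun m => (hφd m t).hasDerivAt
  have dχ := fun m => (hχd m t).hasDerivAt
  have dP := (dψ (n+1)).fun_add (dψ (n-1))
  have e1 : n + 1 + 1 = n + 2 := by ring
  have e2 : n + 1 - 1 = n := by ring
  have e3 : n + 1 - 2 = n - 1 := by ring
  have e4 : n - 1 + 1 = n := by ring
  have e5 : n - 1 - 1 = n - 2 := by ring
  have m1p := hM1 (n+1) t
  have m1m := hM1 (n-1) t
  have m1 := hM1 n t
  have m2p := hM2 (n+1) t
  have m2 := hM2 n t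
  have m3p := hM3 (n+1) t
  have m3 := hM3 n t
  have l1p := hL1 (n+1) t
  have l1m := hL1 (n-1) t
  have l1 := hL1 n t
  have l2 := hL2 n t
  have l2m := hL2 (n-1) t
  have l3 := hL3 n t
  have l3m := hL3 (n-1) t
  simp only [e1, e2, e3, e4, e5] at m1p m1m m2p m3p l1p l1m l2m l3m
  have I2 := Complex.I_mul_I
  refine ⟨?_, ?_, ?_⟩
  · ext k
    have A := (hasDerivAt_pi.1 (dφ (n+1)) k).fun_sub (hasDerivAt_pi.1 (dφ n) k)
    have B := (dP.const_mul (Complex.I/2)).fun_mul (hasDerivAt_pi.1 (dSb n) k)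
    have E := A.unique (B.congr_of_eventuallyEq
      (Filter.Eventually.of_forall fun s => by simpa using congrFun (hL2 n s) k))
    have p := congrFun m2p k
    have q := congrFun m2 k
    simp only [Pi.add_apply, Pi.sub_apply, Pi.smul_apply, smul_eq_mul, Pi.zero_apply] at *
    linear_combination (-2) * E + 2 * p - 2 * q - Sb n t k * (m1p + m1m)
  · ext k
    have A := (hasDerivAt_pi.1 (dχ (n+1)) k).fun_add (hasDerivAt_pi.1 (dχ n) k)
    have B := (dP.const_mul (Complex.I/2)).fun_mul (hasDerivAt_pi.1 (dS n) k)
    have E := A.unique (B.congr_of_eventuallyEq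
      (Filter.Eventually.of_forall fun s => by simpa using congrFun (hL3 n s) k))
    have p := congrFun m3p k
    have q := congrFun m3 k
    have r := congrFun l3 k
    simp only [Pi.add_apply, Pi.sub_apply, Pi.smul_apply, smul_eq_mul, Pi.zero_apply] at *
    linear_combination (-2) * E + 2 * p + 2 * q - S n t k * (m1p + m1m)
      + 4 * Complex.I * c * r + 2 * c * (ψ (n+1) t + ψ (n-1) t) * S n t k * I2
  · have A := (dv n).fun_mul dP
    have B := (((dψ n).const_mul lam).fun_sub (pair_hasDerivAt (dS n) (dφ n))).fun_sub
      (pair_hasDerivAt (dχ n) (dSb n))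
    have E := A.unique (B.congr_of_eventuallyEq (Filter.Eventually.of_forall fun s => hL1 n s))
    have f1 : φ (n+1) t = φ n t + ((Complex.I/2) * (ψ (n+1) t + ψ (n-1) t)) • Sb n t := by
      rw [← l2]; abel
    have f2 : φ (n-1) t = φ n t - ((Complex.I/2) * (ψ n t + ψ (n-2) t)) • Sb (n-1) t := by
      rw [← l2m]; abel
    have f3 : χ (n+1) t = ((Complex.I/2) * (ψ (n+1) t + ψ (n-1) t)) • S n t - χ n t := by
      rw [← l3]; abel
    have f4 : χ (n-1) t = ((Complex.I/2) * (ψ n t + ψ (n-2) t)) • S (n-1) t - χ n t := by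
      rw [← l3m]; abel
    rw [m2, m3] at E
    rw [f1, f3] at l1p
    rw [f2, f4] at l1m
    simp only [pair_add_left, pair_add_right, pair_sub_left, pair_sub_right,
      pair_smul_left, pair_smul_right] at *
    linear_combination Complex.I * E + lam * m1 - v n t * (m1p + m1m) - v n t * (l1p + l1m)
      + c * l1 - 2 * c * pair (χ n t) (Sb n t) * I2
end

section
/- Let v_n(τ) ∈ ℂ (n ∈ ℤ, τ ∈ ℝ) be differentiable in τ and satisfy the modified Volterra lattice v_{n,τ} = 2 v_n² (v_{n+1} − v_{n−1}) for all n and τ. Define u_n(τ) := 2 v_n(τ) v_{n+1}(τ). Then u satisfies the Volterra lattice u_{n,τ} = u_n (u_{n+1} − u_{n−1}) for all n and τ. -/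
theorem stmt3 (v : ℤ → ℝ → ℂ)
    (hvd : ∀ n, Differentiable ℝ (v n))
    (hmV : ∀ (n : ℤ) (τ : ℝ), deriv (v n) τ = 2 * (v n τ)^2 * (v (n+1) τ - v (n-1) τ))
    (u : ℤ → ℝ → ℂ)
    (hu : ∀ (n : ℤ) (τ : ℝ), u n τ = 2 * v n τ * v (n+1) τ) :
    ∀ (n : ℤ) (τ : ℝ), deriv (u n) τ = u n τ * (u (n+1) τ - u (n-1) τ) := by
  intro n τ
  have h1 : HasDerivAt (v n) _ τ := (hvd n τ).hasDerivAt
  have h2 : HasDerivAt (v (n+1)) _ τ := (hvd (n+1) τ).hasDerivAt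
  have h3 := (h1.const_mul (2:ℂ)).mul h2
  have hun : u n = (fun y => 2 * v n y) * v (n+1) := by
    funext t
    simpa using hu n t
  rw [hun, h3.deriv, ← hun, hmV, hmV, hu, hu, hu]
  have e1 : n - 1 + 1 = n := by ring
  have e2 : n + 1 - 1 = n := by ring
  rw [e1, e2]
  ring
end

section
/- Let S, S̄ : ℝ² → ℂ^N, L : ℝ² → ℂ, ψ : ℝ² → ℂ and φ : ℝ² → ℂ^N be functions of (x,t) of class C³, and let ζ ∈ ℂ. Suppose that for all (x,t): (spatial system) ψ_{xx} + L ψ + ⟨S, φ⟩ = ζ ψ and φ_x = i S̄ ψ; and (time system) i ψ_t = ψ_{xx} + L ψ and φ_t = S̄ ψ_x − S̄_x ψ. Then for all (x,t): (a) (i S̄_t + S̄_{xx} + L S̄) ψ = 0 (an identity in ℂ^N), and (b) (L_t − 2 ∂_x⟨S, S̄⟩) ψ + ⟨S_t + i(S_{xx} + L S), φ⟩ = 0. -/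
open Complex BigOperators

/-- Partial derivative in the first (space) variable. -/
noncomputable def pdx {E : Type*} [NormedAddCommGroup E] [NormedSpace ℝ E]
    (f : ℝ → ℝ → E) : ℝ → ℝ → E := fun x t => deriv (fun y => f y t) x

/-- Partial derivative in the second (time) variable. -/
noncomputable def pdt {E : Type*} [NormedAddCommGroup E] [NormedSpace ℝ E]
    (f : ℝ → ℝ → E) : ℝ → ℝ → E := fun x t => deriv (fun s => f x s) t


section helpers
variable {E : Type*} [NormedAddCommGroup E] [NormedSpace ℝ E]

theorem hdx_aux {f : ℝ → ℝ → E} (hf : Differentiable ℝ (Function.uncurry f)) (x t : ℝ) :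
    HasDerivAt (fun y => f y t) (fderiv ℝ (Function.uncurry f) (x, t) (1, 0)) x := by
  have h1 : HasDerivAt (fun y : ℝ => (y, t)) ((1 : ℝ), (0 : ℝ)) x :=
    (hasDerivAt_id x).prodMk (hasDerivAt_const x t)
  exact (hf (x, t)).hasFDerivAt.comp_hasDerivAt x h1

theorem hdt_aux {f : ℝ → ℝ → E} (hf : Differentiable ℝ (Function.uncurry f)) (x t : ℝ) :
    HasDerivAt (fun s => f x s) (fderiv ℝ (Function.uncurry f) (x, t) (0, 1)) t := by
  have h1 : HasDerivAt (fun s : ℝ => (x, s)) ((0 : ℝ), (1 : ℝ)) t :=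
    (hasDerivAt_const t x).prodMk (hasDerivAt_id t)
  exact (hf (x, t)).hasFDerivAt.comp_hasDerivAt t h1

theorem hdx {f : ℝ → ℝ → E} (hf : Differentiable ℝ (Function.uncurry f)) (x t : ℝ) :
    HasDerivAt (fun y => f y t) (pdx f x t) x :=
  (hdx_aux hf x t).differentiableAt.hasDerivAt

theorem hdt {f : ℝ → ℝ → E} (hf : Differentiable ℝ (Function.uncurry f)) (x t : ℝ) :
    HasDerivAt (fun s => f x s) (pdt f x t) t :=
  (hdt_aux hf x t).differentiableAt.hasDerivAt

theorem pdx_eq {f : ℝ → ℝ → E} (hf : Differentiable ℝ (Function.uncurry f)) :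
    Function.uncurry (pdx f) = fun p => fderiv ℝ (Function.uncurry f) p (1, 0) := by
  funext ⟨x, t⟩
  exact (hdx_aux hf x t).deriv

theorem pdt_eq {f : ℝ → ℝ → E} (hf : Differentiable ℝ (Function.uncurry f)) :
    Function.uncurry (pdt f) = fun p => fderiv ℝ (Function.uncurry f) p (0, 1) := by
  funext ⟨x, t⟩
  exact (hdt_aux hf x t).deriv

theorem cdx {f : ℝ → ℝ → E} (n : ℕ) (hf : ContDiff ℝ (n + 1) (Function.uncurry f)) :
    ContDiff ℝ n (Function.uncurry (pdx f)) := by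
  rw [pdx_eq (hf.differentiable (by simp))]
  exact (hf.fderiv_right le_rfl).clm_apply contDiff_const

theorem cdt {f : ℝ → ℝ → E} (n : ℕ) (hf : ContDiff ℝ (n + 1) (Function.uncurry f)) :
    ContDiff ℝ n (Function.uncurry (pdt f)) := by
  rw [pdt_eq (hf.differentiable (by simp))]
  exact (hf.fderiv_right le_rfl).clm_apply contDiff_const

theorem pd_comm {f : ℝ → ℝ → E} (hf : ContDiff ℝ 2 (Function.uncurry f)) :
    pdt (pdx f) = pdx (pdt f) := by
  have h2 : ContDiff ℝ ((1 : ℕ) + 1) (Function.uncurry f) := by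
    convert hf using 1; norm_num
  have hd := hf.differentiable (by simp)
  have hdd : Differentiable ℝ (fderiv ℝ (Function.uncurry f)) :=
    (h2.fderiv_right le_rfl).differentiable (by simp)
  have hX := (cdx 1 h2).differentiable (by simp)
  have hT := (cdt 1 h2).differentiable (by simp)
  funext x t
  have e1 := (hdt_aux hX x t).deriv
  have e2 := (hdx_aux hT x t).deriv
  rw [pdx_eq hd] at e1
  rw [pdt_eq hd] at e2
  rw [fderiv_clm_apply (hdd _) (by fun_prop)] at e1 e2
  have hsym : IsSymmSndFDerivAt ℝ (Function.uncurry f) (x, t) :=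
    hf.contDiffAt.isSymmSndFDerivAt (by simp)
  have e3 := hsym.eq (0, 1) (1, 0)
  unfold pdt at e2 ⊢
  unfold pdx at e1 ⊢
  rw [e1, e2]
  simpa using e3

end helpers

theorem pair_hd {N : ℕ} {a b : ℝ → Fin N → ℂ} {a' b' : Fin N → ℂ} {x : ℝ}
    (ha : HasDerivAt a a' x) (hb : HasDerivAt b b' x) :
    HasDerivAt (fun y => pair (a y) (b y)) (pair a' (b x) + pair (a x) b') x := by
  unfold pair
  rw [← Finset.sum_add_distrib]
  rw [hasDerivAt_pi] at ha hb
  exact HasDerivAt.fun_sum fun k _ => (ha k).mul (hb k)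

theorem pair_al {N : ℕ} (a b c : Fin N → ℂ) : pair (a + b) c = pair a c + pair b c := by
  simp [pair, add_mul, Finset.sum_add_distrib]
theorem pair_sr {N : ℕ} (a b c : Fin N → ℂ) : pair a (b - c) = pair a b - pair a c := by
  simp [pair, mul_sub]
theorem pair_ml {N : ℕ} (r : ℂ) (a b : Fin N → ℂ) : pair (r • a) b = r * pair a b := by
  simp [pair, Finset.mul_sum, mul_assoc]
theorem pair_mr {N : ℕ} (r : ℂ) (a b : Fin N → ℂ) : pair a (r • b) = r * pair a b := by
  simp [pair, Finset.mul_sum, mul_left_comm]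

theorem stmt6 {N : ℕ} (hN : 1 ≤ N)
    (S Sb : ℝ → ℝ → Fin N → ℂ) (L ψ : ℝ → ℝ → ℂ) (φ : ℝ → ℝ → Fin N → ℂ) (ζ : ℂ)
    (hS3 : ContDiff ℝ 3 (Function.uncurry S)) (hSb3 : ContDiff ℝ 3 (Function.uncurry Sb))
    (hL3 : ContDiff ℝ 3 (Function.uncurry L)) (hψ3 : ContDiff ℝ 3 (Function.uncurry ψ))
    (hφ3 : ContDiff ℝ 3 (Function.uncurry φ))
    (hspec : ∀ (x t : ℝ),
      pdx (pdx ψ) x t + L x t * ψ x t + pair (S x t) (φ x t) = ζ * ψ x t)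
    (hφx : ∀ (x t : ℝ), pdx φ x t = (Complex.I * ψ x t) • Sb x t)
    (hψt : ∀ (x t : ℝ), Complex.I * pdt ψ x t = pdx (pdx ψ) x t + L x t * ψ x t)
    (hφt : ∀ (x t : ℝ), pdt φ x t = (pdx ψ x t) • Sb x t - (ψ x t) • pdx Sb x t) :
    ∀ (x t : ℝ),
      ((ψ x t) • (Complex.I • pdt Sb x t + pdx (pdx Sb) x t + (L x t) • Sb x t) = 0)
      ∧ ((pdt L x t - 2 * pdx (fun y s => pair (S y s) (Sb y s)) x t) * ψ x t
          + pair (pdt S x t + Complex.I • (pdx (pdx S) x t + (L x t) • S x t)) (φ x t)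
          = 0) := by
  have c3 {E : Type} [NormedAddCommGroup E] [NormedSpace ℝ E] {f : ℝ → ℝ → E}
      (hf : ContDiff ℝ 3 (Function.uncurry f)) :
      ContDiff ℝ ((2 : ℕ) + 1) (Function.uncurry f) := by
    convert hf using 1; norm_num
  have c2 {E : Type} [NormedAddCommGroup E] [NormedSpace ℝ E] {f : ℝ → ℝ → E}
      (hf : ContDiff ℝ (2 : ℕ) (Function.uncurry f)) :
      ContDiff ℝ ((1 : ℕ) + 1) (Function.uncurry f) := by
    convert hf using 1; norm_num
  have n2 : (2 : WithTop ℕ∞) ≤ 3 := by norm_num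
  have dS := hS3.differentiable (by simp)
  have dSb := hSb3.differentiable (by simp)
  have dL := hL3.differentiable (by simp)
  have dψ := hψ3.differentiable (by simp)
  have dφ := hφ3.differentiable (by simp)
  have cSx := cdx 2 (c3 hS3)
  have dSx := cSx.differentiable (by simp)
  have dSbx := (cdx 2 (c3 hSb3)).differentiable (by simp)
  have cψx := cdx 2 (c3 hψ3)
  have dψx := cψx.differentiable (by simp)
  have dψxx := (cdx 1 (c2 cψx)).differentiable (by simp)
  intro x t
  constructor
  · have h1 : pdt (pdx φ) x t = (I * ψ x t) • pdt Sb x t + (I * pdt ψ x t) • Sb x t := by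
      have : pdx φ = fun x t => (I * ψ x t) • Sb x t := by
        funext x t; exact hφx x t
      rw [this]
      exact (((hdt dψ x t).const_mul I).smul (hdt dSb x t)).deriv
    have h2 : pdx (pdt φ) x t = (pdx ψ x t • pdx Sb x t + pdx (pdx ψ) x t • Sb x t)
        - (ψ x t • pdx (pdx Sb) x t + pdx ψ x t • pdx Sb x t) := by
      have : pdt φ = fun x t => (pdx ψ x t) • Sb x t - (ψ x t) • pdx Sb x t := by
        funext x t; exact hφt x t
      rw [this]
      exact (((hdx dψx x t).smul (hdx dSb x t)).sub ((hdx dψ x t).smul (hdx dSbx x t))).deriv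
    rw [pd_comm (hφ3.of_le n2), h2, hψt] at h1
    funext k
    have h3 := congrFun h1 k
    simp only [Pi.add_apply, Pi.sub_apply, Pi.smul_apply, smul_eq_mul, Pi.zero_apply] at h3 ⊢
    linear_combination -h3
  · have hP : ∀ x t, pair (S x t) (φ x t) = ζ * ψ x t - I * pdt ψ x t := by
      intro x t
      linear_combination hspec x t + hψt x t
    have hPx : ∀ x t, HasDerivAt (fun y => pair (S y t) (φ y t))
        (pair (pdx S x t) (φ x t) + I * ψ x t * pair (S x t) (Sb x t)) x := by
      intro x t
      have := pair_hd (hdx dS x t) (hdx dφ x t)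
      rwa [hφx, pair_mr] at this
    have hPt : HasDerivAt (fun s => pair (S x s) (φ x s))
        (pair (pdt S x t) (φ x t) + (pdx ψ x t * pair (S x t) (Sb x t)
          - ψ x t * pair (S x t) (pdx Sb x t))) t := by
      have := pair_hd (hdt dS x t) (hdt dφ x t)
      rwa [hφt, pair_sr, pair_mr, pair_mr] at this
    have hSS : HasDerivAt (fun y => pair (S y t) (Sb y t))
        (pair (pdx S x t) (Sb x t) + pair (S x t) (pdx Sb x t)) x :=
      pair_hd (hdx dS x t) (hdx dSb x t)
    have e1 : pdt ψ = fun x t => -I * (ζ * ψ x t - pair (S x t) (φ x t)) := by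
      funext x t
      rw [hP]
      linear_combination pdt ψ x t * I_mul_I
    have e2 : pdx (pdt ψ) = fun x t => -I * (ζ * pdx ψ x t -
        (pair (pdx S x t) (φ x t) + I * ψ x t * pair (S x t) (Sb x t))) := by
      funext x t
      rw [e1]
      exact ((((hdx dψ x t).const_mul ζ).sub (hPx x t)).const_mul (-I)).deriv
    have e3 : pdx (pdx (pdt ψ)) x t = -I * (ζ * pdx (pdx ψ) x t -
        ((pair (pdx (pdx S) x t) (φ x t) + I * ψ x t * pair (pdx S x t) (Sb x t))
        + (I * pdx ψ x t * pair (S x t) (Sb x t) + I * ψ x t *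
          (pair (pdx S x t) (Sb x t) + pair (S x t) (pdx Sb x t))))) := by
      rw [e2]
      have h1 := pair_hd (hdx dSx x t) (hdx dφ x t)
      rw [hφx, pair_mr] at h1
      exact ((((hdx dψx x t).const_mul ζ).sub
        (h1.add (((hdx dψ x t).const_mul I).mul hSS))).const_mul (-I)).deriv
    have e4 : pdt (pdx (pdx ψ)) x t = pdx (pdx (pdt ψ)) x t := by
      rw [pd_comm (by exact_mod_cast cψx), pd_comm (hψ3.of_le n2)]
    have e5 : pdt (pdx (pdx ψ)) x t + (pdt L x t * ψ x t + L x t * pdt ψ x t)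
        + (pair (pdt S x t) (φ x t) + (pdx ψ x t * pair (S x t) (Sb x t)
          - ψ x t * pair (S x t) (pdx Sb x t))) = ζ * pdt ψ x t := by
      have h1 := ((hdt dψxx x t).add ((hdt dL x t).mul (hdt dψ x t))).add hPt
      have h2 := (hdt dψ x t).const_mul ζ
      have h3 : (fun y => ζ * ψ x y) = ((fun s => pdx (pdx ψ) x s) +
          (fun s => L x s) * fun s => ψ x s) + fun s => pair (S x s) (φ x s) := by
        funext s
        exact (hspec x s).symm
      rw [h3] at h2
      exact h1.unique h2
    have e6 : pdx (fun y s => pair (S y s) (Sb y s)) x t =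
        pair (pdx S x t) (Sb x t) + pair (S x t) (pdx Sb x t) := hSS.deriv
    have e7 := congrFun (congrFun e1 x) t
    have e8 := hspec x t
    rw [e4, e3, e7] at e5
    rw [e6, pair_al, pair_ml, pair_al, pair_ml]
    generalize pair (S x t) (φ x t) = P at *
    generalize pair (pdx S x t) (Sb x t) = A at *
    generalize pair (S x t) (pdx Sb x t) = B at *
    generalize pair (S x t) (Sb x t) = C at *
    linear_combination e5 + I * ζ * e8 - (2 * A * ψ x t + B * ψ x t + C * pdx ψ x t) * I_mul_I
end

section
/- Suppose S_n(t), S̄_n(t) ∈ ℂ^N and v_n(t) ∈ ℂ (n ∈ ℤ, t ∈ ℝ, differentiable in t) satisfy the discrete multicomponent Yajima–Oikawa system (dgvYO) with constant c ∈ ℂ. Then for all n and t the following conservation law holds: d/dt (⟨S_{n+1}, S̄_n⟩ + ⟨S_n, S̄_{n+1}⟩) = Δ⁺[ −i v_n (⟨S_{n+1}, S̄_{n−1}⟩ − ⟨S_{n−1}, S̄_{n+1}⟩) ], i.e., the time derivative of ⟨S_{n+1}, S̄_n⟩ + ⟨S_n, S̄_{n+1}⟩ equals −i v_{n+1}(⟨S_{n+2},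 S̄_n⟩ − ⟨S_n, S̄_{n+2}⟩) + i v_n(⟨S_{n+1}, S̄_{n−1}⟩ − ⟨S_{n−1}, S̄_{n+1}⟩). -/
open Complex BigOperators

theorem stmt8 {N : ℕ} (hN : 1 ≤ N)
    (S Sb : ℤ → ℝ → Fin N → ℂ) (v : ℤ → ℝ → ℂ) (c : ℂ)
    (hSd : ∀ n, Differentiable ℝ (S n)) (hSbd : ∀ n, Differentiable ℝ (Sb n))
    (hvd : ∀ n, Differentiable ℝ (v n))
    (h1 : ∀ (n : ℤ) (t : ℝ),
      Complex.I • deriv (S n) t = (v n t) • (S (n+1) t + S (n-1) t) - c • S n t)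
    (h2 : ∀ (n : ℤ) (t : ℝ),
      Complex.I • deriv (Sb n) t = -((v n t) • (Sb (n+1) t + Sb (n-1) t)) + c • Sb n t)
    (h3 : ∀ (n : ℤ) (t : ℝ), deriv (v n) t = (1/2) * v n t *
      ((pair (S (n+1) t) (Sb n t) + pair (S n t) (Sb (n+1) t))
        - (pair (S n t) (Sb (n-1) t) + pair (S (n-1) t) (Sb n t)))) :
    ∀ (n : ℤ) (t : ℝ),
      deriv (fun s => pair (S (n+1) s) (Sb n s) + pair (S n s) (Sb (n+1) s)) t
      = -Complex.I * v (n+1) t * (pair (S (n+2) t) (Sb n t) - pair (S n t) (Sb (n+2) t))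
        + Complex.I * v n t * (pair (S (n+1) t) (Sb (n-1) t) - pair (S (n-1) t) (Sb (n+1) t)) := by
  intro n t
  have hS : ∀ m k, HasDerivAt (fun s => S m s k)
      (-Complex.I * (v m t * (S (m+1) t k + S (m-1) t k) - c * S m t k)) t := by
    intro m k
    have h := hasDerivAt_pi.1 (hSd m t).hasDerivAt k
    have e := congrFun (h1 m t) k
    simp only [Pi.smul_apply, Pi.add_apply, Pi.sub_apply, smul_eq_mul] at e
    rw [← e, ← mul_assoc, neg_mul, Complex.I_mul_I, neg_neg, one_mul]
    exact h
  have hSb : ∀ m k, HasDerivAt (fun s => Sb m s k)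
      (-Complex.I * (-(v m t * (Sb (m+1) t k + Sb (m-1) t k)) + c * Sb m t k)) t := by
    intro m k
    have h := hasDerivAt_pi.1 (hSbd m t).hasDerivAt k
    have e := congrFun (h2 m t) k
    simp only [Pi.smul_apply, Pi.add_apply, Pi.neg_apply, smul_eq_mul] at e
    rw [← e, ← mul_assoc, neg_mul, Complex.I_mul_I, neg_neg, one_mul]
    exact h
  have hp : ∀ a b : ℤ, HasDerivAt (fun s => pair (S a s) (Sb b s)) _ t := fun a b =>
    HasDerivAt.fun_sum (u := Finset.univ) (fun k _ => (hS a k).mul (hSb b k))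
  rw [((hp (n+1) n).fun_add (hp n (n+1))).deriv]
  have e1 : n + 1 + 1 = n + 2 := by ring
  have e2 : n + 1 - 1 = n := by ring
  simp only [pair, e1, e2]
  simp only [mul_sub, Finset.mul_sum, ← Finset.sum_add_distrib, ← Finset.sum_sub_distrib]
  refine Finset.sum_congr rfl fun k _ => ?_
  ring
end

section
/- Suppose S_n(t), S̄_n(t) ∈ ℂ^N and v_n(t) ∈ ℂ (n ∈ ℤ, t ∈ ℝ, differentiable in t) satisfy the discrete multicomponent Yajima–Oikawa system (dgvYO) with constant c ∈ ℂ. Then for every choice of component indices j, k ∈ {1, …, N} and all n and t, the componentwise conservation law holds: d/dt ( S_{n+1}^{(j)} S̄_n^{(k)} + S_n^{(j)} S̄_{n+1}^{(k)} ) = Δ⁺[ −i v_n ( S_{n+1}^{(j)} S̄_{n−1}^{(k)} − S_{n−1}^{(j)} S̄_{n+1}^{(k)} ) ], where S_n^{(j)} denotes the j-th component of S_n and S̄_n^{(k)} the k-th component of S̄_n. -/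
open Complex BigOperators

theorem stmt9 {N : ℕ} (hN : 1 ≤ N)
    (S Sb : ℤ → ℝ → Fin N → ℂ) (v : ℤ → ℝ → ℂ) (c : ℂ)
    (hSd : ∀ n, Differentiable ℝ (S n)) (hSbd : ∀ n, Differentiable ℝ (Sb n))
    (hvd : ∀ n, Differentiable ℝ (v n))
    (h1 : ∀ (n : ℤ) (t : ℝ),
      Complex.I • deriv (S n) t = (v n t) • (S (n+1) t + S (n-1) t) - c • S n t)
    (h2 : ∀ (n : ℤ) (t : ℝ),
      Complex.I • deriv (Sb n) t = -((v n t) • (Sb (n+1) t + Sb (n-1) t)) + c • Sb n t)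
    (h3 : ∀ (n : ℤ) (t : ℝ), deriv (v n) t = (1/2) * v n t *
      ((pair (S (n+1) t) (Sb n t) + pair (S n t) (Sb (n+1) t))
        - (pair (S n t) (Sb (n-1) t) + pair (S (n-1) t) (Sb n t)))) :
    ∀ (j k : Fin N) (n : ℤ) (t : ℝ),
      deriv (fun s => S (n+1) s j * Sb n s k + S n s j * Sb (n+1) s k) t
      = -Complex.I * v (n+1) t * (S (n+2) t j * Sb n t k - S n t j * Sb (n+2) t k)
        + Complex.I * v n t * (S (n+1) t j * Sb (n-1) t k - S (n-1) t j * Sb (n+1) t k) := by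
  intro j k n t
  have dS : ∀ m (i : Fin N), HasDerivAt (fun s => S m s i) (deriv (S m) t i) t :=
    fun m i => hasDerivAt_pi.1 ((hSd m) t).hasDerivAt i
  have dB : ∀ m (i : Fin N), HasDerivAt (fun s => Sb m s i) (deriv (Sb m) t i) t :=
    fun m i => hasDerivAt_pi.1 ((hSbd m) t).hasDerivAt i
  have H := ((dS (n+1) j).mul (dB n k)).add ((dS n j).mul (dB (n+1) k))
  have e1 : ∀ m, Complex.I * deriv (S m) t j
      = v m t * (S (m+1) t j + S (m-1) t j) - c * S m t j := fun m => by
    exact congrFun (h1 m t) j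
  have e2 : ∀ m, Complex.I * deriv (Sb m) t k
      = -(v m t * (Sb (m+1) t k + Sb (m-1) t k)) + c * Sb m t k := fun m => by
    exact congrFun (h2 m t) k
  have a1 := e1 (n+1)
  have a2 := e2 (n+1)
  have a3 := e1 n
  have a4 := e2 n
  rw [show n + 1 + 1 = n + 2 by ring, show n + 1 - 1 = n by ring] at a1 a2
  refine H.deriv.trans ?_
  apply mul_left_cancel₀ Complex.I_ne_zero
  linear_combination (Sb n t k) * a1 + (S n t j) * a2 + (Sb (n+1) t k) * a3
    + (S (n+1) t j) * a4
    + (v (n+1) t * (S (n+2) t j * Sb n t k - S n t j * Sb (n+2) t k)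
      - v n t * (S (n+1) t j * Sb (n-1) t k - S (n-1) t j * Sb (n+1) t k)) * Complex.I_mul_I
end

section
/- Suppose S_n(t), S̄_n(t) ∈ ℂ^N and v_n(t) ∈ ℂ (n ∈ ℤ, t ∈ ℝ, differentiable in t) satisfy the discrete multicomponent Yajima–Oikawa system (dgvYO) with constant c ∈ ℂ. Then for all n and t the third conservation law holds: d/dt [ v_n v_{n+1} + (i/2) v_{n+1} (⟨S_{n+2}, S̄_n⟩ − ⟨S_n, S̄_{n+2}⟩) − (1/8) (⟨S_{n+1}, S̄_n⟩ + ⟨S_n, S̄_{n+1}⟩)² ] = Δ⁺[ (1/2) v_n v_{n+1} (⟨S_{n+2}, S̄_{n−1}⟩ + ⟨S_{n−1}, S̄_{n+2}⟩ + ⟨S_n, S̄_{n−1}⟩ + ⟨S_{n−1}, S̄_n⟩) + (i/4) v_n (⟨S_{n+1}, S̄_n⟩ + ⟨S_n, S̄_{n+1}⟩)(⟨S_{n+1}, S̄_{n−1}⟩ − ⟨S_{n−1}, S̄_{n+1}⟩) ]. -/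
open Complex BigOperators

theorem pair_hasDerivAt_s10 {N : ℕ} {f g : ℝ → Fin N → ℂ} {f' g' : Fin N → ℂ} {t : ℝ}
    (hf : HasDerivAt f f' t) (hg : HasDerivAt g g' t) :
    HasDerivAt (fun s => pair (f s) (g s)) (pair f' (g t) + pair (f t) g') t := by
  unfold pair
  rw [← Finset.sum_add_distrib]
  exact HasDerivAt.fun_sum fun k _ =>
    ((hasDerivAt_pi.1 hf k).mul (hasDerivAt_pi.1 hg k))

theorem pair_left {N : ℕ} (w c : ℂ) (a b d e : Fin N → ℂ) :
    pair (-Complex.I • (w • (a + b) - c • d)) e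
      = -Complex.I * (w * (pair a e + pair b e) - c * pair d e) := by
  simp only [pair, Finset.mul_sum, ← Finset.sum_add_distrib, ← Finset.sum_sub_distrib]
  refine Finset.sum_congr rfl fun k _ => ?_
  simp only [Pi.smul_apply, Pi.sub_apply, Pi.add_apply, smul_eq_mul]
  ring

theorem pair_right {N : ℕ} (w c : ℂ) (a b d e : Fin N → ℂ) :
    pair e (-Complex.I • (-(w • (a + b)) + c • d))
      = -Complex.I * (-(w * (pair e a + pair e b)) + c * pair e d) := by
  simp only [pair, Finset.mul_sum, ← Finset.sum_add_distrib, ← Finset.sum_neg_distrib]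
  refine Finset.sum_congr rfl fun k _ => ?_
  simp only [Pi.smul_apply, Pi.neg_apply, Pi.add_apply, smul_eq_mul]
  ring

theorem stmt10 {N : ℕ} (hN : 1 ≤ N)
    (S Sb : ℤ → ℝ → Fin N → ℂ) (v : ℤ → ℝ → ℂ) (c : ℂ)
    (hSd : ∀ n, Differentiable ℝ (S n)) (hSbd : ∀ n, Differentiable ℝ (Sb n))
    (hvd : ∀ n, Differentiable ℝ (v n))
    (h1 : ∀ (n : ℤ) (t : ℝ),
      Complex.I • deriv (S n) t = (v n t) • (S (n+1) t + S (n-1) t) - c • S n t)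
    (h2 : ∀ (n : ℤ) (t : ℝ),
      Complex.I • deriv (Sb n) t = -((v n t) • (Sb (n+1) t + Sb (n-1) t)) + c • Sb n t)
    (h3 : ∀ (n : ℤ) (t : ℝ), deriv (v n) t = (1/2) * v n t *
      ((pair (S (n+1) t) (Sb n t) + pair (S n t) (Sb (n+1) t))
        - (pair (S n t) (Sb (n-1) t) + pair (S (n-1) t) (Sb n t)))) :
    ∀ (n : ℤ) (t : ℝ),
      deriv (fun s =>
        v n s * v (n+1) s
        + (Complex.I/2) * v (n+1) s * (pair (S (n+2) s) (Sb n s) - pair (S n s) (Sb (n+2) s))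
        - (1/8) * (pair (S (n+1) s) (Sb n s) + pair (S n s) (Sb (n+1) s))^2) t
      = ((1/2) * v (n+1) t * v (n+2) t *
            (pair (S (n+3) t) (Sb n t) + pair (S n t) (Sb (n+3) t)
              + pair (S (n+1) t) (Sb n t) + pair (S n t) (Sb (n+1) t))
          + (Complex.I/4) * v (n+1) t *
            (pair (S (n+2) t) (Sb (n+1) t) + pair (S (n+1) t) (Sb (n+2) t)) *
            (pair (S (n+2) t) (Sb n t) - pair (S n t) (Sb (n+2) t)))
        - ((1/2) * v n t * v (n+1) t *
            (pair (S (n+2) t) (Sb (n-1) t) + pair (S (n-1) t) (Sb (n+2) t)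
              + pair (S n t) (Sb (n-1) t) + pair (S (n-1) t) (Sb n t))
          + (Complex.I/4) * v n t *
            (pair (S (n+1) t) (Sb n t) + pair (S n t) (Sb (n+1) t)) *
            (pair (S (n+1) t) (Sb (n-1) t) - pair (S (n-1) t) (Sb (n+1) t))) := by
  intro n t
  have hI : ∀ x y : Fin N → ℂ, Complex.I • x = y → x = -Complex.I • y := by
    rintro x y rfl
    rw [smul_smul]
    simp
  have hp : ∀ a b : ℤ, HasDerivAt (fun s => pair (S a s) (Sb b s))
      (-Complex.I * (v a t * (pair (S (a+1) t) (Sb b t) + pair (S (a-1) t) (Sb b t))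
        - v b t * (pair (S a t) (Sb (b+1) t) + pair (S a t) (Sb (b-1) t)))) t := by
    intro a b
    have h := pair_hasDerivAt_s10 (hSd a t).hasDerivAt (hSbd b t).hasDerivAt
    rw [hI _ _ (h1 a t), hI _ _ (h2 b t), pair_left, pair_right] at h
    convert h using 1
    ring
  have hv : ∀ a : ℤ, HasDerivAt (v a) _ t := fun a => by
    have h := (hvd a t).hasDerivAt
    rw [h3 a t] at h
    exact h
  have key := (((hv n).fun_mul (hv (n+1))).fun_add
    (((hv (n+1)).const_mul (Complex.I/2)).fun_mul ((hp (n+2) n).fun_sub (hp n (n+2))))).fun_sub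
    ((((hp (n+1) n).fun_add (hp n (n+1))).fun_pow 2).const_mul (1/8))
  rw [key.deriv]
  have e1 : n + 1 + 1 = n + 2 := by ring
  have e2 : n + 2 + 1 = n + 3 := by ring
  have e3 : n + 1 - 1 = n := by ring
  have e4 : n + 2 - 1 = n + 1 := by ring
  simp only [e1, e2, e3, e4]
  push_cast
  ring_nf
  simp only [Complex.I_sq]
  ring
end

section
/- Suppose scalar sequences S_n(t), S̄_n(t), v_n(t) ∈ ℂ (n ∈ ℤ, t ∈ ℝ, differentiable in t) satisfy the scalar discrete Yajima–Oikawa system: i S_{n,t} = v_n (S_{n+1} + S_{n−1}) − c S_n, i S̄_{n,t} = −v_n (S̄_{n+1} + S̄_{n−1}) + c S̄_n, and v_{n,t} = (1/2) v_n [ (S_{n+1} S̄_n + S_n S̄_{n+1}) − (S_n S̄_{n−1} + S_{n−1} S̄_n) ], for some constant c ∈ ℂ. Then for all n and t the following conservation law holds: d/dt { v_n (S_{n+1} + S_{n−1})(S̄_{n+1} + S̄_{n−1}) + (i/4)[ (S_{n+1} S̄_n)² − (S_n S̄_{n+1})² ] } = Δ⁺{ −i v_n v_{n−1} [ (S_{n+1}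 + S_{n−1})(S̄_n + S̄_{n−2}) − (S_n + S_{n−2})(S̄_{n+1} + S̄_{n−1}) ] + (1/2) v_n [ S_{n−1} S̄_{n−1} (S_n S̄_{n−1} + S_{n−1} S̄_n) + S_{n+1} S̄_{n−1} S_n S̄_{n−1} + S_{n−1} S̄_{n+1} S_{n−1} S̄_n ] }. -/
theorem stmt11 (S Sb v : ℤ → ℝ → ℂ) (c : ℂ)
    (hSd : ∀ n, Differentiable ℝ (S n)) (hSbd : ∀ n, Differentiable ℝ (Sb n))
    (hvd : ∀ n, Differentiable ℝ (v n))
    (h1 : ∀ (n : ℤ) (t : ℝ),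
      Complex.I * deriv (S n) t = v n t * (S (n+1) t + S (n-1) t) - c * S n t)
    (h2 : ∀ (n : ℤ) (t : ℝ),
      Complex.I * deriv (Sb n) t = -(v n t * (Sb (n+1) t + Sb (n-1) t)) + c * Sb n t)
    (h3 : ∀ (n : ℤ) (t : ℝ), deriv (v n) t = (1/2) * v n t *
      ((S (n+1) t * Sb n t + S n t * Sb (n+1) t)
        - (S n t * Sb (n-1) t + S (n-1) t * Sb n t))) :
    ∀ (n : ℤ) (t : ℝ),
      deriv (fun s =>
        v n s * (S (n+1) s + S (n-1) s) * (Sb (n+1) s + Sb (n-1) s)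
        + (Complex.I/4) * ((S (n+1) s * Sb n s)^2 - (S n s * Sb (n+1) s)^2)) t
      = (-Complex.I * v (n+1) t * v n t *
            ((S (n+2) t + S n t) * (Sb (n+1) t + Sb (n-1) t)
              - (S (n+1) t + S (n-1) t) * (Sb (n+2) t + Sb n t))
          + (1/2) * v (n+1) t *
            (S n t * Sb n t * (S (n+1) t * Sb n t + S n t * Sb (n+1) t)
              + S (n+2) t * Sb n t * S (n+1) t * Sb n t
              + S n t * Sb (n+2) t * S n t * Sb (n+1) t))
        - (-Complex.I * v n t * v (n-1) t *
            ((S (n+1) t + S (n-1) t) * (Sb n t + Sb (n-2) t)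
              - (S n t + S (n-2) t) * (Sb (n+1) t + Sb (n-1) t))
          + (1/2) * v n t *
            (S (n-1) t * Sb (n-1) t * (S n t * Sb (n-1) t + S (n-1) t * Sb n t)
              + S (n+1) t * Sb (n-1) t * S n t * Sb (n-1) t
              + S (n-1) t * Sb (n+1) t * S (n-1) t * Sb n t)) := by
  intro n t
  have dS : ∀ n, HasDerivAt (S n)
      (-Complex.I * (v n t * (S (n+1) t + S (n-1) t) - c * S n t)) t := by
    intro n
    have h := (hSd n t).hasDerivAt
    have e : deriv (S n) t = -Complex.I * (v n t * (S (n+1) t + S (n-1) t) - c * S n t) := by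
      rw [← h1 n t]
      linear_combination (deriv (S n) t) * Complex.I_sq
    rwa [e] at h
  have dB : ∀ n, HasDerivAt (Sb n)
      (-Complex.I * (-(v n t * (Sb (n+1) t + Sb (n-1) t)) + c * Sb n t)) t := by
    intro n
    have h := (hSbd n t).hasDerivAt
    have e : deriv (Sb n) t
        = -Complex.I * (-(v n t * (Sb (n+1) t + Sb (n-1) t)) + c * Sb n t) := by
      rw [← h2 n t]
      linear_combination (deriv (Sb n) t) * Complex.I_sq
    rwa [e] at h
  have dv := (hvd n t).hasDerivAt
  rw [h3 n t] at dv
  have S1 := dS (n+1)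
  have S0 := dS n
  have Sm := dS (n-1)
  have B1 := dB (n+1)
  have B0 := dB n
  have Bm := dB (n-1)
  have e1 : n + 1 + 1 = n + 2 := by ring
  have e2 : n + 1 - 1 = n := by ring
  have e3 : n - 1 + 1 = n := by ring
  have e4 : n - 1 - 1 = n - 2 := by ring
  simp only [e1, e2, e3, e4] at S1 Sm B1 Bm
  have key := ((dv.mul (S1.add Sm)).mul (B1.add Bm)).add
    ((((S1.mul B0).pow 2).sub ((S0.mul B1).pow 2)).const_mul (Complex.I/4))
  refine Eq.trans key.deriv ?_
  simp only [Pi.add_apply, Pi.mul_apply]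
  have hI : Complex.I ^ 2 = -1 := Complex.I_sq
  generalize Complex.I = i at hI ⊢
  generalize S (n+2) t = s2, S (n+1) t = s1, S n t = s0, S (n-1) t = r1, S (n-2) t = r2
  generalize Sb (n+2) t = b2, Sb (n+1) t = b1, Sb n t = b0, Sb (n-1) t = a1, Sb (n-2) t = a2
  generalize v (n+1) t = v1, v n t = v0, v (n-1) t = w1
  push_cast
  simp only [pow_one]
  ring_nf
  rw [hI]
  ring
end

section
/- Let v_n(t), ψ_n(t) ∈ ℂ (n ∈ ℤ, t ∈ ℝ) with ψ differentiable in t, let c, λ ∈ ℂ with λ ≠ 0, and suppose v_n(t) ≠ 0 and ψ_n(t) ≠ 0 for all n and t. Suppose ψ satisfies the time evolution i ψ_{n,t} = v_n (ψ_{n+1} + ψ_{n−1}) − c ψ_n for all n and t. Define F_n(t) := λ ψ_n(t) / (v_n(t) ψ_{n−1}(t)). Then for all n and t the generating conservation identity holds: ψ_{n,t}/ψ_n − ψ_{n−1,t}/ψ_{n−1} = Δ⁺[ −i ( λ^{−1} v_{n−1} v_n F_n + λ F_{n−1}^{−1} ) ], i.e., the left-hand side equals −i( λ^{−1} v_n v_{n+1}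 F_{n+1} + λ F_n^{−1} ) + i( λ^{−1} v_{n−1} v_n F_n + λ F_{n−1}^{−1} ). -/
theorem stmt12 (v ψ : ℤ → ℝ → ℂ) (c lam : ℂ) (hlam : lam ≠ 0)
    (hψd : ∀ n, Differentiable ℝ (ψ n))
    (hv0 : ∀ (n : ℤ) (t : ℝ), v n t ≠ 0) (hψ0 : ∀ (n : ℤ) (t : ℝ), ψ n t ≠ 0)
    (hM : ∀ (n : ℤ) (t : ℝ),
      Complex.I * deriv (ψ n) t = v n t * (ψ (n+1) t + ψ (n-1) t) - c * ψ n t)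
    (F : ℤ → ℝ → ℂ)
    (hF : ∀ (n : ℤ) (t : ℝ), F n t = lam * ψ n t / (v n t * ψ (n-1) t)) :
    ∀ (n : ℤ) (t : ℝ),
      deriv (ψ n) t / ψ n t - deriv (ψ (n-1)) t / ψ (n-1) t
      = -Complex.I * (lam⁻¹ * v n t * v (n+1) t * F (n+1) t + lam * (F n t)⁻¹)
        + Complex.I * (lam⁻¹ * v (n-1) t * v n t * F n t + lam * (F (n-1) t)⁻¹) := by
  have key : ∀ (n : ℤ) (t : ℝ), deriv (ψ n) t / ψ n t
      = -Complex.I * (lam⁻¹ * v n t * v (n+1) t * F (n+1) t + lam * (F n t)⁻¹)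
        + Complex.I * c := by
    intro n t
    have hd : deriv (ψ n) t
        = -Complex.I * (v n t * (ψ (n+1) t + ψ (n-1) t) - c * ψ n t) := by
      rw [← hM n t, ← mul_assoc, neg_mul, Complex.I_mul_I]
      ring
    have h1 := hv0 n t
    have h2 := hv0 (n+1) t
    have h3 := hψ0 n t
    have h4 := hψ0 (n-1) t
    rw [hd, hF, hF, add_sub_cancel_right]
    field_simp
    ring
  intro n t
  have h := key (n-1) t
  rw [sub_add_cancel] at h
  rw [key n t, h]
  ring
end

section
/- Let λ ∈ ℂ with λ ≠ 0, and let S_n, S̄_n ∈ ℂ^N, v_n, ψ_n ∈ ℂ, φ_n, χ_n ∈ ℂ^N (n ∈ ℤ) satisfy v_n ≠ 0 and ψ_n ≠ 0 for all n, together with the spectral problem: v_n(ψ_{n+1} + ψ_{n−1}) = λ ψ_n − ⟨S_n, φ_n⟩ − ⟨χ_n, S̄_n⟩, φ_{n+1} − φ_n = (i/2) S̄_n (ψ_{n+1} + ψ_{n−1}), χ_{n+1} + χ_n = (i/2) S_n (ψ_{n+1} + ψ_{n−1}), for all n. Define F_n ∈ ℂ and G_n, H_n ∈ ℂ^N by ψ_n/ψ_{n−1}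 = λ^{−1} v_n F_n, φ_n/ψ_{n−1} = −(i/2) S̄_n + λ^{−1} v_n G_n, and χ_n/ψ_{n−1} = (i/2) S_n + λ^{−1} v_n H_n. Then for all n the following hold: F_n = 1 + λ^{−2} v_n v_{n+1} F_n F_{n+1} + λ^{−1} ⟨S_n, G_n⟩ + λ^{−1} ⟨H_n, S̄_n⟩; G_n = F_n ( −(i/2) S̄_{n+1} + λ^{−1} v_{n+1} G_{n+1} ) − (i/(2λ)) v_{n+1} F_n F_{n+1} S̄_n; and H_n = −F_n ( (i/2) S_{n+1} + λ^{−1} v_{n+1} H_{n+1} ) + (i/(2λ)) v_{n+1} F_n F_{n+1} S_n. -/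
open Complex BigOperators

theorem stmt13 {N : ℕ} (hN : 1 ≤ N) (lam : ℂ) (hlam : lam ≠ 0)
    (S Sb : ℤ → Fin N → ℂ) (v ψ : ℤ → ℂ) (φ χ : ℤ → Fin N → ℂ)
    (hv0 : ∀ n : ℤ, v n ≠ 0) (hψ0 : ∀ n : ℤ, ψ n ≠ 0)
    (hL1 : ∀ n : ℤ, v n * (ψ (n+1) + ψ (n-1))
      = lam * ψ n - pair (S n) (φ n) - pair (χ n) (Sb n))
    (hL2 : ∀ n : ℤ, φ (n+1) - φ n = ((Complex.I/2) * (ψ (n+1) + ψ (n-1))) • Sb n)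
    (hL3 : ∀ n : ℤ, χ (n+1) + χ n = ((Complex.I/2) * (ψ (n+1) + ψ (n-1))) • S n)
    (F : ℤ → ℂ) (G H : ℤ → Fin N → ℂ)
    (hF : ∀ n : ℤ, ψ n / ψ (n-1) = lam⁻¹ * v n * F n)
    (hG : ∀ n : ℤ, (ψ (n-1))⁻¹ • φ n = (-(Complex.I/2)) • Sb n + (lam⁻¹ * v n) • G n)
    (hH : ∀ n : ℤ, (ψ (n-1))⁻¹ • χ n = (Complex.I/2) • S n + (lam⁻¹ * v n) • H n) :
    ∀ n : ℤ,
      (F n = 1 + lam⁻¹^2 * v n * v (n+1) * F n * F (n+1)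
        + lam⁻¹ * pair (S n) (G n) + lam⁻¹ * pair (H n) (Sb n))
      ∧ (G n = F n • ((-(Complex.I/2)) • Sb (n+1) + (lam⁻¹ * v (n+1)) • G (n+1))
          - (Complex.I / (2 * lam) * v (n+1) * F n * F (n+1)) • Sb n)
      ∧ (H n = -(F n • ((Complex.I/2) • S (n+1) + (lam⁻¹ * v (n+1)) • H (n+1)))
          + (Complex.I / (2 * lam) * v (n+1) * F n * F (n+1)) • S n) := by
  intro n
  obtain ⟨a, ha⟩ : ∃ a, a = lam⁻¹ * v n := ⟨_, rfl⟩
  obtain ⟨b, hb⟩ : ∃ b, b = lam⁻¹ * v (n+1) := ⟨_, rfl⟩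
  have hp := hψ0 (n-1)
  have hq := hψ0 n
  have ha0 : a ≠ 0 := by rw [ha]; exact mul_ne_zero (inv_ne_zero hlam) (hv0 n)
  have hva : v n = lam * a := by rw [ha]; field_simp
  have hvb : v (n+1) = lam * b := by rw [hb]; field_simp
  have e : n + 1 - 1 = n := by ring
  have hq1 : ψ n = a * F n * ψ (n-1) := by
    rw [ha, ← hF n]; field_simp
  have hr1 : ψ (n+1) = b * F (n+1) * ψ n := by
    have h := hF (n+1)
    rw [e] at h
    rw [hb, ← h]; field_simp
  have hφ : ∀ k, φ n k = ψ (n-1) * (-(Complex.I/2) * Sb n k + a * G n k) := by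
    intro k
    have h := congrFun (hG n) k
    simp only [Pi.smul_apply, Pi.add_apply, smul_eq_mul] at h
    rw [ha, ← h]; field_simp
  have hφ1 : ∀ k, φ (n+1) k = ψ n * (-(Complex.I/2) * Sb (n+1) k + b * G (n+1) k) := by
    intro k
    have h := congrFun (hG (n+1)) k
    simp only [Pi.smul_apply, Pi.add_apply, smul_eq_mul, e] at h
    rw [hb, ← h]; field_simp
  have hχ : ∀ k, χ n k = ψ (n-1) * ((Complex.I/2) * S n k + a * H n k) := by
    intro k
    have h := congrFun (hH n) k
    simp only [Pi.smul_apply, Pi.add_apply, smul_eq_mul] at h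
    rw [ha, ← h]; field_simp
  have hχ1 : ∀ k, χ (n+1) k = ψ n * ((Complex.I/2) * S (n+1) k + b * H (n+1) k) := by
    intro k
    have h := congrFun (hH (n+1)) k
    simp only [Pi.smul_apply, Pi.add_apply, smul_eq_mul, e] at h
    rw [hb, ← h]; field_simp
  have hpa : ψ (n-1) * a ≠ 0 := mul_ne_zero hp ha0
  have hI : Complex.I / (2 * lam) * v (n+1) = Complex.I / 2 * b := by
    rw [hvb]; field_simp
  refine ⟨?_, ?_, ?_⟩
  · have hsum : pair (S n) (φ n) + pair (χ n) (Sb n)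
        = ψ (n-1) * a * (pair (S n) (G n) + pair (H n) (Sb n)) := by
      unfold pair
      rw [← Finset.sum_add_distrib, ← Finset.sum_add_distrib, Finset.mul_sum]
      refine Finset.sum_congr rfl fun k _ => ?_
      rw [hφ, hχ]; ring
    have h := hL1 n
    have hl : lam * lam⁻¹ = 1 := mul_inv_cancel₀ hlam
    have h2 : (ψ (n-1) * a) * (lam * F n) = (ψ (n-1) * a) *
        (lam * (1 + a * b * F n * F (n+1)) + pair (S n) (G n) + pair (H n) (Sb n)) := by
      rw [hr1, hva] at h
      rw [hq1] at h
      linear_combination hsum - h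
    have h3 := mul_left_cancel₀ hpa h2
    apply mul_left_cancel₀ hlam
    rw [h3, hva, hvb]
    field_simp
  · funext k
    have h := congrFun (hL2 n) k
    simp only [Pi.smul_apply, Pi.sub_apply, smul_eq_mul] at h
    simp only [Pi.smul_apply, Pi.sub_apply, Pi.add_apply, smul_eq_mul, hI, ← hb]
    apply mul_left_cancel₀ hpa
    rw [hφ, hφ1, hr1, hq1] at h
    linear_combination -h
  · funext k
    have h := congrFun (hL3 n) k
    simp only [Pi.smul_apply, Pi.add_apply, smul_eq_mul] at h
    simp only [Pi.smul_apply, Pi.neg_apply, Pi.add_apply, smul_eq_mul, hI, ← hb]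
    apply mul_left_cancel₀ hpa
    rw [hχ, hχ1, hr1, hq1] at h
    linear_combination h
end

section
/- Suppose q_n(t), q̄_n(t) ∈ ℂ^N and v_n(t) ∈ ℂ (n ∈ ℤ, t ∈ ℝ, differentiable in t) satisfy the system: i q_{n,t} = v_n q_{n+1}, i q̄_{n,t} = −v_n q̄_{n−1}, and v_{n,t} = (1/2) v_n Δ⁺⟨q_n, q̄_{n−1}⟩ = (1/2) v_n (⟨q_{n+1}, q̄_n⟩ − ⟨q_n, q̄_{n−1}⟩), for all n and t. Then for every n the quantity v_n − (i/2) ⟨q_n, q̄_n⟩ is conserved: its time derivative vanishes for all t. -/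
open Complex BigOperators

theorem stmt14 {N : ℕ} (hN : 1 ≤ N)
    (q qb : ℤ → ℝ → Fin N → ℂ) (v : ℤ → ℝ → ℂ)
    (hqd : ∀ n, Differentiable ℝ (q n)) (hqbd : ∀ n, Differentiable ℝ (qb n))
    (hvd : ∀ n, Differentiable ℝ (v n))
    (h1 : ∀ (n : ℤ) (t : ℝ), Complex.I • deriv (q n) t = (v n t) • q (n+1) t)
    (h2 : ∀ (n : ℤ) (t : ℝ), Complex.I • deriv (qb n) t = -((v n t) • qb (n-1) t))
    (h3 : ∀ (n : ℤ) (t : ℝ), deriv (v n) t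
      = (1/2) * v n t * (pair (q (n+1) t) (qb n t) - pair (q n t) (qb (n-1) t))) :
    ∀ (n : ℤ) (t : ℝ),
      deriv (fun s => v n s - (Complex.I/2) * pair (q n s) (qb n s)) t = 0 := by
  intro n t
  have hq : ∀ k, HasDerivAt (fun s => q n s k) (deriv (q n) t k) t :=
    hasDerivAt_pi.1 (hqd n t).hasDerivAt
  have hb : ∀ k, HasDerivAt (fun s => qb n s k) (deriv (qb n) t k) t :=
    hasDerivAt_pi.1 (hqbd n t).hasDerivAt
  have hp : HasDerivAt (fun s => pair (q n s) (qb n s))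
      (∑ k, (deriv (q n) t k * qb n t k + q n t k * deriv (qb n) t k)) t := by
    unfold pair
    exact HasDerivAt.fun_sum fun k _ => (hq k).mul (hb k)
  have hmain := (hvd n t).hasDerivAt.sub (hp.const_mul (Complex.I / 2))
  refine hmain.deriv.trans ?_
  rw [h3, sub_eq_zero]
  unfold pair
  rw [← Finset.sum_sub_distrib, Finset.mul_sum, Finset.mul_sum]
  refine Finset.sum_congr rfl fun k _ => ?_
  have e1 := congrFun (h1 n t) k
  have e2 := congrFun (h2 n t) k
  simp only [Pi.smul_apply, Pi.neg_apply, smul_eq_mul] at e1 e2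
  linear_combination (-(1/2) * qb n t k) * e1 - (1/2) * q n t k * e2
end

section
/- Suppose q_n(t), q̄_n(t) ∈ ℂ^N and v_n(t) ∈ ℂ (n ∈ ℤ, t ∈ ℝ, differentiable in t) satisfy the system: i q_{n,t} = v_n q_{n+1}, i q̄_{n,t} = −v_n q̄_{n−1}, and v_{n,t} = (1/2) v_n (⟨q_{n+1}, q̄_n⟩ − ⟨q_n, q̄_{n−1}⟩), for all n and t. Then there exists a time-independent sequence k : ℤ → ℂ such that for all n and t: v_n(t) = k_n + (i/2) ⟨q_n(t), q̄_n(t)⟩, and consequently q and q̄ satisfy the closed system i q_{n,t} = ( k_n + (i/2) ⟨q_n, q̄_n⟩ ) q_{n+1} and i q̄_{n,t} = −( k_n + (i/2) ⟨q_n, q̄_n⟩ ) q̄_{n−1} for all n and t. -/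
open Complex BigOperators

theorem stmt15 {N : ℕ} (hN : 1 ≤ N)
    (q qb : ℤ → ℝ → Fin N → ℂ) (v : ℤ → ℝ → ℂ)
    (hqd : ∀ n, Differentiable ℝ (q n)) (hqbd : ∀ n, Differentiable ℝ (qb n))
    (hvd : ∀ n, Differentiable ℝ (v n))
    (h1 : ∀ (n : ℤ) (t : ℝ), Complex.I • deriv (q n) t = (v n t) • q (n+1) t)
    (h2 : ∀ (n : ℤ) (t : ℝ), Complex.I • deriv (qb n) t = -((v n t) • qb (n-1) t))
    (h3 : ∀ (n : ℤ) (t : ℝ), deriv (v n) t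
      = (1/2) * v n t * (pair (q (n+1) t) (qb n t) - pair (q n t) (qb (n-1) t))) :
    ∃ k : ℤ → ℂ, ∀ (n : ℤ) (t : ℝ),
      (v n t = k n + (Complex.I/2) * pair (q n t) (qb n t))
      ∧ (Complex.I • deriv (q n) t
          = (k n + (Complex.I/2) * pair (q n t) (qb n t)) • q (n+1) t)
      ∧ (Complex.I • deriv (qb n) t
          = -((k n + (Complex.I/2) * pair (q n t) (qb n t)) • qb (n-1) t)) := by
  have hpair : ∀ (n : ℤ) (t : ℝ), HasDerivAt (fun s => pair (q n s) (qb n s))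
      (-Complex.I * v n t * (pair (q (n+1) t) (qb n t) - pair (q n t) (qb (n-1) t))) t := by
    intro n t
    have hq := hasDerivAt_pi.1 (hqd n t).hasDerivAt
    have hqb := hasDerivAt_pi.1 (hqbd n t).hasDerivAt
    have hs := HasDerivAt.fun_sum (u := Finset.univ) (fun j _ => (hq j).mul (hqb j))
    refine (hs.congr_deriv ?_)
    unfold pair
    rw [← Finset.sum_sub_distrib, Finset.mul_sum]
    refine Finset.sum_congr rfl fun j _ => ?_
    have e1 := congrFun (h1 n t) j
    have e2 := congrFun (h2 n t) j
    simp only [Pi.smul_apply, Pi.neg_apply, smul_eq_mul] at e1 e2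
    linear_combination (-Complex.I * qb n t j) * e1 + (-Complex.I * q n t j) * e2
      + (deriv (q n) t j * qb n t j + q n t j * deriv (qb n) t j) * Complex.I_mul_I
  have hw : ∀ (n : ℤ) (t : ℝ),
      HasDerivAt (fun s => v n s - (Complex.I/2) * pair (q n s) (qb n s)) 0 t := by
    intro n t
    refine ((hvd n t).hasDerivAt.sub ((hpair n t).const_mul (Complex.I/2))).congr_deriv ?_
    rw [h3]
    linear_combination (1/2 * v n t *
      (pair (q (n+1) t) (qb n t) - pair (q n t) (qb (n-1) t))) * Complex.I_mul_I
  have hk : ∀ (n : ℤ) (t : ℝ), v n t =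
      (v n 0 - (Complex.I/2) * pair (q n 0) (qb n 0))
        + (Complex.I/2) * pair (q n t) (qb n t) := by
    intro n t
    have := is_const_of_deriv_eq_zero (fun s => (hw n s).differentiableAt)
      (fun s => (hw n s).deriv) t 0
    linear_combination this
  refine ⟨fun n => v n 0 - (Complex.I/2) * pair (q n 0) (qb n 0), fun n t => ⟨hk n t, ?_, ?_⟩⟩
  · rw [h1, hk n t]
  · rw [h2, hk n t]
end

section
/- Suppose S_n(t), S̄_n(t) ∈ ℂ^N and v_n(t) ∈ ℂ (n ∈ ℤ, t ∈ ℝ, differentiable in t) satisfy v_n(t) ≠ 0 for all n, t and the equation v_{n,t} = (1/2) v_n Δ⁺(⟨S_n, S̄_{n−1}⟩ + ⟨S_{n−1}, S̄_n⟩) for all n and t. Let w_n(t) ∈ ℂ (n ∈ ℤ) be differentiable in t with w_n(t) ≠ 0 and w_n = v_n w_{n−1} for all n and t. If there exists one index n₀ ∈ ℤ such that w_{n₀,t} = (1/2) w_{n₀} (⟨S_{n₀+1}, S̄_{n₀}⟩ + ⟨S_{n₀}, S̄_{n₀+1}⟩) for all t, then for every n ∈ ℤ and all t: w_{n,t} =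 (1/2) w_n (⟨S_{n+1}, S̄_n⟩ + ⟨S_n, S̄_{n+1}⟩). -/
open Complex BigOperators

theorem stmt17 {N : ℕ} (hN : 1 ≤ N)
    (S Sb : ℤ → ℝ → Fin N → ℂ) (v w : ℤ → ℝ → ℂ)
    (hSd : ∀ n, Differentiable ℝ (S n)) (hSbd : ∀ n, Differentiable ℝ (Sb n))
    (hvd : ∀ n, Differentiable ℝ (v n)) (hwd : ∀ n, Differentiable ℝ (w n))
    (hv0 : ∀ (n : ℤ) (t : ℝ), v n t ≠ 0) (hw0 : ∀ (n : ℤ) (t : ℝ), w n t ≠ 0)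
    (hveq : ∀ (n : ℤ) (t : ℝ), deriv (v n) t = (1/2) * v n t *
      ((pair (S (n+1) t) (Sb n t) + pair (S n t) (Sb (n+1) t))
        - (pair (S n t) (Sb (n-1) t) + pair (S (n-1) t) (Sb n t))))
    (hwrec : ∀ (n : ℤ) (t : ℝ), w n t = v n t * w (n-1) t)
    (n₀ : ℤ)
    (h0 : ∀ t : ℝ, deriv (w n₀) t = (1/2) * w n₀ t *
      (pair (S (n₀+1) t) (Sb n₀ t) + pair (S n₀ t) (Sb (n₀+1) t))) :
    ∀ (n : ℤ) (t : ℝ), deriv (w n) t = (1/2) * w n t *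
      (pair (S (n+1) t) (Sb n t) + pair (S n t) (Sb (n+1) t)) := by
  have hd : ∀ (n : ℤ) (t : ℝ),
      deriv (w n) t = deriv (v n) t * w (n-1) t + v n t * deriv (w (n-1)) t := by
    intro n t
    have hfun : w n = fun s => v n s * w (n-1) s := funext (hwrec n)
    rw [hfun]
    exact ((hvd n t).hasDerivAt.mul (hwd (n-1) t).hasDerivAt).deriv
  intro n
  induction n using Int.inductionOn' (b := n₀) with
  | zero => exact h0
  | succ k _ ih =>
    intro t
    have h1 := hd (k+1) t
    have h2 := hveq (k+1) t
    have h3 := hwrec (k+1) t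
    rw [add_sub_cancel_right] at h1 h2 h3
    rw [h1, h2, ih t, h3]
    ring
  | pred k _ ih =>
    intro t
    have h1 := hd k t
    rw [ih t, hveq k t, hwrec k t] at h1
    rw [sub_add_cancel]
    apply mul_left_cancel₀ (hv0 k t)
    linear_combination -h1
end

section
/- Suppose S_n(t), S̄_n(t) ∈ ℂ^N and v_n(t) ∈ ℂ (n ∈ ℤ, t ∈ ℝ, differentiable in t) satisfy the discrete multicomponent Yajima–Oikawa system (dgvYO) with constant c ∈ ℂ. Let w_n(t) ∈ ℂ be differentiable in t with w_n(t) ≠ 0, w_n = v_n w_{n−1}, and w_{n,t} = (1/2) w_n (⟨S_{n+1}, S̄_n⟩ + ⟨S_n, S̄_{n+1}⟩), for all n and t. Define r_n := w_n^{−1} S_n and r̄_n := w_{n−1} S̄_n. Then (r, r̄, v) satisfies the transformed system (trans_dgvYO): i r_{n,t} = v_n v_{n+1} r_{n+1} + r_{n−1} − (i/2) r_n ( v_n v_{n+1} ⟨r_{n+1}, r̄_n⟩ + ⟨r_n, r̄_{n+1}⟩ ) − c r_n; i r̄_{n,t} = −r̄_{n+1} − v_n v_{n−1} r̄_{n−1}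 + (i/2) r̄_n ( v_n v_{n−1} ⟨r_n, r̄_{n−1}⟩ + ⟨r_{n−1}, r̄_n⟩ ) + c r̄_n; and v_{n,t} = (1/2) v_n Δ⁺( v_n v_{n−1} ⟨r_n, r̄_{n−1}⟩ + ⟨r_{n−1}, r̄_n⟩ ), for all n and t. -/
open Complex BigOperators

theorem stmt18 {N : ℕ} (hN : 1 ≤ N)
    (S Sb : ℤ → ℝ → Fin N → ℂ) (v w : ℤ → ℝ → ℂ) (c : ℂ)
    (hSd : ∀ n, Differentiable ℝ (S n)) (hSbd : ∀ n, Differentiable ℝ (Sb n))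
    (hvd : ∀ n, Differentiable ℝ (v n)) (hwd : ∀ n, Differentiable ℝ (w n))
    (h1 : ∀ (n : ℤ) (t : ℝ),
      Complex.I • deriv (S n) t = (v n t) • (S (n+1) t + S (n-1) t) - c • S n t)
    (h2 : ∀ (n : ℤ) (t : ℝ),
      Complex.I • deriv (Sb n) t = -((v n t) • (Sb (n+1) t + Sb (n-1) t)) + c • Sb n t)
    (h3 : ∀ (n : ℤ) (t : ℝ), deriv (v n) t = (1/2) * v n t *
      ((pair (S (n+1) t) (Sb n t) + pair (S n t) (Sb (n+1) t))
        - (pair (S n t) (Sb (n-1) t) + pair (S (n-1) t) (Sb n t))))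
    (hw0 : ∀ (n : ℤ) (t : ℝ), w n t ≠ 0)
    (hwrec : ∀ (n : ℤ) (t : ℝ), w n t = v n t * w (n-1) t)
    (hwt : ∀ (n : ℤ) (t : ℝ), deriv (w n) t = (1/2) * w n t *
      (pair (S (n+1) t) (Sb n t) + pair (S n t) (Sb (n+1) t)))
    (r rb : ℤ → ℝ → Fin N → ℂ)
    (hr : ∀ (n : ℤ) (t : ℝ), r n t = (w n t)⁻¹ • S n t)
    (hrb : ∀ (n : ℤ) (t : ℝ), rb n t = (w (n-1) t) • Sb n t) :
    ∀ (n : ℤ) (t : ℝ),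
      (Complex.I • deriv (r n) t
        = (v n t * v (n+1) t) • r (n+1) t + r (n-1) t
          - ((Complex.I/2) * (v n t * v (n+1) t * pair (r (n+1) t) (rb n t)
              + pair (r n t) (rb (n+1) t))) • r n t
          - c • r n t)
      ∧ (Complex.I • deriv (rb n) t
        = -(rb (n+1) t) - (v n t * v (n-1) t) • rb (n-1) t
          + ((Complex.I/2) * (v n t * v (n-1) t * pair (r n t) (rb (n-1) t)
              + pair (r (n-1) t) (rb n t))) • rb n t
          + c • rb n t)
      ∧ (deriv (v n) t = (1/2) * v n t *
          ((v (n+1) t * v n t * pair (r (n+1) t) (rb n t) + pair (r n t) (rb (n+1) t))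
            - (v n t * v (n-1) t * pair (r n t) (rb (n-1) t) + pair (r (n-1) t) (rb n t)))) := by
  have pairs : ∀ (x y : ℂ) (a b : Fin N → ℂ), pair (x • a) (y • b) = x * y * pair a b := by
    intro x y a b
    simp only [pair, Finset.mul_sum, Pi.smul_apply, smul_eq_mul]
    exact Finset.sum_congr rfl (fun k _ => by ring)
  -- forward pairing
  have pA : ∀ (n : ℤ) (t : ℝ), v n t * v (n+1) t * pair (r (n+1) t) (rb n t)
      = pair (S (n+1) t) (Sb n t) := by
    intro n t
    have e1 := hwrec (n+1) t
    rw [add_sub_cancel_right] at e1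
    have e2 := hwrec n t
    have z := hw0 (n+1) t
    rw [hr, hrb, pairs]
    have : v n t * v (n+1) t * w (n-1) t = w (n+1) t := by rw [e1, e2]; ring
    calc _ = (v n t * v (n+1) t * w (n-1) t) * (w (n+1) t)⁻¹ * pair (S (n+1) t) (Sb n t) := by ring
      _ = _ := by rw [this, mul_inv_cancel₀ z, one_mul]
  have pB : ∀ (n : ℤ) (t : ℝ), pair (r n t) (rb (n+1) t) = pair (S n t) (Sb (n+1) t) := by
    intro n t
    rw [hr, hrb, pairs, add_sub_cancel_right, inv_mul_cancel₀ (hw0 n t), one_mul]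
  have pA' : ∀ (n : ℤ) (t : ℝ), v n t * v (n-1) t * pair (r n t) (rb (n-1) t)
      = pair (S n t) (Sb (n-1) t) := by
    intro n t
    have := pA (n-1) t
    rw [sub_add_cancel] at this
    rw [← this]; ring
  have pB' : ∀ (n : ℤ) (t : ℝ), pair (r (n-1) t) (rb n t) = pair (S (n-1) t) (Sb n t) := by
    intro n t
    have := pB (n-1) t
    rwa [sub_add_cancel] at this
  intro n t
  have e1 := hwrec (n+1) t
  rw [add_sub_cancel_right] at e1
  have e2 := hwrec n t
  have e3 := hwrec (n-1) t
  have z0 := hw0 n t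
  have z1 := hw0 (n+1) t
  have z2 := hw0 (n-1) t
  refine ⟨?_, ?_, ?_⟩
  · rw [pA, pB]
    have hfun : r n = fun s => (w n s)⁻¹ • S n s := funext (hr n)
    have hd : deriv (r n) t = (w n t)⁻¹ • deriv (S n) t
        + (-(deriv (w n) t) / (w n t)^2) • S n t := by
      rw [hfun]
      exact (((hwd n t).hasDerivAt.fun_inv z0).smul (hSd n t).hasDerivAt).deriv
    rw [hd, hwt, hr (n+1), hr (n-1), hr n]
    funext k
    have h := congrFun (h1 n t) k
    simp only [Pi.smul_apply, Pi.add_apply, Pi.sub_apply, smul_eq_mul] at h ⊢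
    generalize pair (S (n+1) t) (Sb n t) + pair (S n t) (Sb (n+1) t) = P
    have f1 : v n t * v (n+1) t * (w (n+1) t)⁻¹ = v n t * (w n t)⁻¹ := by
      have : v (n+1) t ≠ 0 := fun h0 => z1 (by rw [e1, h0, zero_mul])
      rw [e1]; field_simp
    have f2 : (w (n-1) t)⁻¹ = v n t * (w n t)⁻¹ := by
      have : v n t ≠ 0 := fun h0 => z0 (by rw [e2, h0, zero_mul])
      rw [e2]; field_simp
    have f3 : -(1/2 * w n t * P) / (w n t)^2 = -(1/2) * P * (w n t)⁻¹ := by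
      field_simp
    rw [f2, f3]
    linear_combination (w n t)⁻¹ * h - S (n+1) t k * f1
  · rw [pA', pB']
    have hfun : rb n = fun s => w (n-1) s • Sb n s := funext (hrb n)
    have hd : deriv (rb n) t = w (n-1) t • deriv (Sb n) t + (deriv (w (n-1)) t) • Sb n t := by
      rw [hfun]
      exact ((hwd (n-1) t).hasDerivAt.smul (hSbd n t).hasDerivAt).deriv
    rw [hd, hwt, hrb (n+1), hrb (n-1), hrb n, sub_add_cancel, add_sub_cancel_right]
    funext k
    have h := congrFun (h2 n t) k
    simp only [Pi.smul_apply, Pi.add_apply, Pi.sub_apply, Pi.neg_apply, smul_eq_mul] at h ⊢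
    linear_combination w (n-1) t * h + Sb (n+1) t k * e2 - v n t * Sb (n-1) t k * e3
  · rw [pA', pB', pB, mul_comm (v (n+1) t), pA]
    exact h3 n t
end
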